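/- Let N be a positive integer, I R : Fin N → ℕ families of positive integers, and suppose a tensor X : (∀ n : Fin N, Fin (I n)) → ℝ admits a Tucker decomposition with core G and factor matrices A n as above. Then for every subset S of Fin N, the generalized unfolding of X along S has matrix rank at most ∏_{n ∈ S} rank(A n), where rank(A n) is the matrix rank of the factor matrix A n of size I n × R n. -/

import Mathlib

/-- The generalized unfolding of a tensor `X` along a subset `S` of its modes:
rows are indexed by the multi-indices of the modes in `S`, columns by the
multi-indices of the remaining modes. -/
def unfolding {N : ℕ} (I : Fin N → ℕ) (S : Finset (Fin N))
    (X : (∀ n : Fin N, Fin (I n)) → ℝ) :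
    Matrix ((n : {m : Fin N // m ∈ S}) → Fin (I n.val))
           ((n : {m : Fin N // m ∉ S}) → Fin (I n.val)) ℝ :=
  Matrix.of fun r c =>
    X (fun n => if h : n ∈ S then r ⟨n, h⟩ else c ⟨n, h⟩)

/-
Unfolding turns the Tucker decomposition into a matrix product `P * G_S * Qᵀ`, where `G_S` is the
unfolded core and `P`, `Q` are the Kronecker products of the factor matrices over the modes in `S`
and outside `S`. The rank is therefore at most that of `P`. Factoring each `A n` through dimension
`rank (A n)` factors `P` through dimension `∏ n ∈ S, rank (A n)`.
-/

open Matrix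

theorem exists_eq_mul_fin_rank {m n K : Type*} [Fintype n] [Field K] (M : Matrix m n K) :
    ∃ (B : Matrix m (Fin M.rank) K) (C : Matrix (Fin M.rank) n K), M = B * C := by
  classical
  let b := Module.finBasisOfFinrankEq K (LinearMap.range M.mulVecLin) (n := M.rank) rfl
  let col (j : n) : LinearMap.range M.mulVecLin := M.mulVecLin.rangeRestrict (Pi.single j 1)
  refine ⟨.of fun i k => (b k : m → K) i, .of fun k j => b.repr (col j) k, ?_⟩
  ext i j
  have col_apply : (col j : m → K) i = M i j := by simp [col]
  have col_eq_sum : (col j : m → K) = ∑ k, b.repr (col j) k • (b k : m → K) := by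
    simpa only [AddSubmonoidClass.coe_finsetSum, Submodule.coe_smul] using
      congrArg Subtype.val (b.sum_repr (col j)).symm
  rw [← col_apply, col_eq_sum]
  simp [mul_apply, mul_comm]

section PiKronecker

variable {ι K : Type*} {I J R : ι → Type*} [Fintype ι]

/-- The Kronecker product of a finite family of matrices, its rows and columns being indexed by
multi-indices instead of by iterated pairs. It is the matrix by which a family of factor matrices
acts on a core tensor, so that the tensor with core `G` and factors `A` is `piKronecker A *ᵥ G`. -/
def piKronecker [CommMonoid K] (A : ∀ n, Matrix (I n) (R n) K) :
    Matrix (∀ n, I n) (∀ n, R n) K :=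
  .of fun i r => ∏ n, A n (i n) (r n)

theorem piKronecker_apply [CommMonoid K] (A : ∀ n, Matrix (I n) (R n) K)
    (i : ∀ n, I n) (r : ∀ n, R n) : piKronecker A i r = ∏ n, A n (i n) (r n) :=
  rfl

variable [DecidableEq ι] [∀ n, Fintype (R n)]

theorem piKronecker_mul [CommSemiring K] (B : ∀ n, Matrix (I n) (R n) K)
    (C : ∀ n, Matrix (R n) (J n) K) :
    piKronecker (fun n => B n * C n) = piKronecker B * piKronecker C := by
  ext i j
  simp only [piKronecker_apply, mul_apply, Fintype.prod_sum, Finset.prod_mul_distrib]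

theorem rank_piKronecker_le [Field K] (A : ∀ n, Matrix (I n) (R n) K) :
    (piKronecker A).rank ≤ ∏ n, (A n).rank := by
  choose B C hBC using fun n => exists_eq_mul_fin_rank (A n)
  calc (piKronecker A).rank
    _ = (piKronecker B * piKronecker C).rank := by rw [← piKronecker_mul, ← funext hBC]
    _ ≤ (piKronecker B).rank := rank_mul_le_left _ _
    _ ≤ Fintype.card (∀ n, Fin (A n).rank) := rank_le_card_width _
    _ = ∏ n, (A n).rank := by simp only [Fintype.card_pi, Fintype.card_fin]

end PiKronecker

section TensorUnfolding

variable {ι K : Type*} {I R : ι → Type*} [DecidableEq ι]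

/-- The generalized unfolding of a tensor along a finite set `S` of its modes, as `unfolding` but
for arbitrary types of modes, indices and entries. The multi-index of an entry is glued from its
row and column indices by `Equiv.piEquivPiSubtypeProd`. -/
def tensorUnfolding (S : Finset ι) (X : (∀ n, I n) → K) :
    Matrix (∀ n : {m // m ∈ S}, I n) (∀ n : {m // m ∉ S}, I n) K :=
  .of fun i j => X ((Equiv.piEquivPiSubtypeProd (· ∈ S) I).symm (i, j))

theorem tensorUnfolding_apply (S : Finset ι) (X : (∀ n, I n) → K)
    (i : ∀ n : {m // m ∈ S}, I n) (j : ∀ n : {m // m ∉ S}, I n) :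
    tensorUnfolding S X i j = X ((Equiv.piEquivPiSubtypeProd (· ∈ S) I).symm (i, j)) :=
  rfl

variable [Fintype ι]

theorem piKronecker_piEquivPiSubtypeProd_symm [CommMonoid K] (S : Finset ι)
    (A : ∀ n, Matrix (I n) (R n) K)
    (i : ∀ n : {m // m ∈ S}, I n) (j : ∀ n : {m // m ∉ S}, I n)
    (r : ∀ n : {m // m ∈ S}, R n) (s : ∀ n : {m // m ∉ S}, R n) :
    piKronecker A ((Equiv.piEquivPiSubtypeProd (· ∈ S) I).symm (i, j))
        ((Equiv.piEquivPiSubtypeProd (· ∈ S) R).symm (r, s)) =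
      piKronecker (fun n : {m // m ∈ S} => A n) i r *
        piKronecker (fun n : {m // m ∉ S} => A n) j s := by
  have prod_split (f : ι → K) :
      ∏ n, f n = (∏ n : {m // m ∈ S}, f n) * ∏ n : {m // m ∉ S}, f n := by
    convert (Fintype.prod_subtype_mul_prod_subtype (· ∈ S) f).symm
  simp only [piKronecker_apply, prod_split, Equiv.piEquivPiSubtypeProd_symm_apply]
  exact congrArg₂ (· * ·)
    (Fintype.prod_congr _ _ fun n => by rw [dif_pos n.prop, dif_pos n.prop])
    (Fintype.prod_congr _ _ fun n => by rw [dif_neg n.prop, dif_neg n.prop])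

variable [∀ n, Fintype (R n)]

theorem tensorUnfolding_piKronecker_mulVec [CommSemiring K] (S : Finset ι)
    (A : ∀ n, Matrix (I n) (R n) K) (G : (∀ n, R n) → K) :
    tensorUnfolding S (piKronecker A *ᵥ G) =
      piKronecker (fun n : {m // m ∈ S} => A n) *
        (tensorUnfolding S G * (piKronecker fun n : {m // m ∉ S} => A n)ᵀ) := by
  ext i j
  simp only [tensorUnfolding_apply, mulVec, dotProduct, mul_apply, transpose_apply,
    Finset.mul_sum]
  rw [← (Equiv.piEquivPiSubtypeProd (· ∈ S) R).symm.sum_comp, Fintype.sum_prod_type]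
  simp only [piKronecker_piEquivPiSubtypeProd_symm, mul_assoc, mul_comm (G _)]

theorem tucker_unfolding_rank_le_prod_factor_ranks_general [Field K] [∀ n, Fintype (I n)]
    (X : (∀ n, I n) → K) (G : (∀ n, R n) → K) (A : ∀ n, Matrix (I n) (R n) K)
    (hX : ∀ i, X i = ∑ r, G r * ∏ n, A n (i n) (r n)) (S : Finset ι) :
    (tensorUnfolding S X).rank ≤ ∏ n ∈ S, (A n).rank := by
  have X_eq_mulVec : X = piKronecker A *ᵥ G := by
    ext i
    simp only [hX, mulVec, dotProduct, piKronecker_apply, mul_comm]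
  calc (tensorUnfolding S X).rank
    _ ≤ (piKronecker fun n : {m // m ∈ S} => A n).rank := by
      rw [X_eq_mulVec, tensorUnfolding_piKronecker_mulVec]
      exact rank_mul_le_left _ _
    _ ≤ ∏ n : {m // m ∈ S}, (A n).rank := rank_piKronecker_le _
    _ = ∏ n ∈ S, (A n).rank := Finset.prod_coe_sort S fun n => (A n).rank

end TensorUnfolding

/-- If an order-`N` tensor admits a Tucker decomposition, then its generalized
unfolding along any subset `S` of its modes has matrix rank at most the product
of the ranks of the factor matrices of the modes in `S`. -/
theorem tucker_unfolding_rank_le_prod_factor_ranks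
    (N : ℕ) (hN : 0 < N)
    (I R : Fin N → ℕ) (hI : ∀ n : Fin N, 0 < I n) (hR : ∀ n : Fin N, 0 < R n)
    (X : (∀ n : Fin N, Fin (I n)) → ℝ)
    (G : (∀ n : Fin N, Fin (R n)) → ℝ)
    (A : ∀ n : Fin N, Fin (I n) → Fin (R n) → ℝ)
    (hX : ∀ i : ∀ n : Fin N, Fin (I n),
      X i = ∑ r : ∀ n : Fin N, Fin (R n), G r * ∏ n : Fin N, A n (i n) (r n))
    (S : Finset (Fin N)) :
    (unfolding I S X).rank ≤
      ∏ n ∈ S, (Matrix.of (A n) : Matrix (Fin (I n)) (Fin (R n)) ℝ).rank :=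
  tucker_unfolding_rank_le_prod_factor_ranks_general X G (fun n => .of (A n)) hX S
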